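/- Let r > 0, θ ∈ ℝ, σ > 0, μ ∈ ℝ. Then the function f(x) = (1/(σ√π Γ(r/2))) · exp(θ(x−μ)/σ²) · (|x−μ|/(2√(θ²+σ²)))^{(r−1)/2} · K_{(r−1)/2}(√(θ²+σ²)|x−μ|/σ²) is a probability density function on ℝ; that is, f is nonnegative and ∫_{−∞}^{∞} f(x) dx = 1. -/

import Mathlib

open MeasureTheory ProbabilityTheory

/-- The modified Bessel function of the second kind `K_ν(x)`, for `x > 0` given by
`K_ν(x) = ∫₀^∞ exp(−x cosh t) cosh(ν t) dt`. -/
noncomputable def besselK (ν x : ℝ) : ℝ :=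
  ∫ t in Set.Ioi (0 : ℝ), Real.exp (-x * Real.cosh t) * Real.cosh (ν * t)

/-- The density of the variance-gamma distribution `VG(r, θ, σ, μ)`. -/
noncomputable def vgPDF (r θ σ μ x : ℝ) : ℝ :=
  1 / (σ * Real.sqrt Real.pi * Real.Gamma (r / 2)) * Real.exp (θ * (x - μ) / σ ^ 2) *
    (|x - μ| / (2 * Real.sqrt (θ ^ 2 + σ ^ 2))) ^ ((r - 1) / 2) *
    besselK ((r - 1) / 2) (Real.sqrt (θ ^ 2 + σ ^ 2) * |x - μ| / σ ^ 2)

/-!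
The variance-gamma law is a normal variance-mean mixture: if `V` is gamma distributed with shape
`r / 2` and rate `1 / 2`, and `X` given `V = v` is normal with mean `μ + θ v` and variance `σ² v`,
then `X` has density `vgPDF r θ σ μ`. By Tonelli, a mixture of normal densities has the total mass
of its mixing measure, here one.

The mixture density is found by completing the square in the normal density, which leaves an
integral of the form `∫₀^∞ v ^ (ν - 1) exp (-(α² v + β² / v) / 2) dv`. The substitution
`v = (β / α) eᵗ` turns its exponent into `-α β cosh t`, so it is a multiple of `K_ν(α β)`.
-/

open Real Set

section Integrals

variable {E : Type*} [NormedAddCommGroup E] [NormedSpace ℝ E]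

lemma integral_eq_integral_Ioi_add_comp_neg {f : ℝ → E} (hf : Integrable f) :
    ∫ t, f t = ∫ t in Ioi (0 : ℝ), (f t + f (-t)) := by
  rw [integral_add hf.integrableOn hf.comp_neg.integrableOn, integral_comp_neg_Ioi, neg_zero,
    add_comm, intervalIntegral.integral_Iic_add_Ioi hf.integrableOn hf.integrableOn]

lemma integral_Ioi_zero_eq_integral_exp_smul (f : ℝ → E) :
    ∫ v in Ioi (0 : ℝ), f v = ∫ t, exp t • f (exp t) := by
  rw [← range_exp, ← image_univ, integral_image_eq_integral_abs_deriv_smul MeasurableSet.univ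
    (fun t _ => (hasDerivAt_exp t).hasDerivWithinAt) exp_injective.injOn, setIntegral_univ]
  simp only [abs_exp]

lemma integral_integral_eq_measureReal_univ {α β : Type*} [MeasurableSpace α] [MeasurableSpace β]
    {m : Measure α} [SFinite m] {ρ : Measure β} [IsFiniteMeasure ρ] {p : β → α → ℝ}
    (hp : AEStronglyMeasurable (Function.uncurry p) (ρ.prod m))
    (hp_nonneg : ∀ v x, 0 ≤ p v x) (hp_one : ∀ᵐ v ∂ρ, ∫ x, p v x ∂m = 1) :
    ∫ x, ∫ v, p v x ∂ρ ∂m = ρ.real univ := by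
  have hp_int : Integrable (Function.uncurry p) (ρ.prod m) := by
    refine (integrable_prod_iff hp).mpr
      ⟨hp_one.mono fun v hv => integrable_of_integral_eq_one hv, ?_⟩
    refine (integrable_const (1 : ℝ)).congr (hp_one.mono fun v hv => ?_)
    simp only [Function.uncurry_apply_pair, norm_of_nonneg (hp_nonneg v _), hv]
  calc ∫ x, ∫ v, p v x ∂ρ ∂m = ∫ v, ∫ x, p v x ∂m ∂ρ := (integral_integral_swap hp_int).symm
    _ = ∫ _, 1 ∂ρ := integral_congr_ae hp_one
    _ = ρ.real univ := by rw [integral_const, smul_eq_mul, mul_one]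

end Integrals

section BesselK

lemma besselK_nonneg (ν x : ℝ) : 0 ≤ besselK ν x :=
  integral_nonneg fun _ => mul_nonneg (exp_pos _).le (cosh_pos _).le

lemma one_add_sq_div_two_le_cosh (t : ℝ) : 1 + t ^ 2 / 2 ≤ cosh t := by
  have h_sinh : (t / 2) ^ 2 ≤ sinh (t / 2) ^ 2 := by
    rw [sq_le_sq, abs_sinh]
    exact self_le_sinh_iff.mpr (abs_nonneg _)
  have h_double : cosh t = cosh (t / 2) ^ 2 + sinh (t / 2) ^ 2 := by
    rw [← cosh_two_mul, mul_div_cancel₀ t two_ne_zero]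
  linarith [cosh_sq (t / 2)]

lemma integrable_exp_neg_mul_cosh_add {z : ℝ} (hz : 0 < z) (ν : ℝ) :
    Integrable fun t => exp (-z * cosh t + ν * t) := by
  refine ((integrable_exp_neg_mul_sq (show 0 < z / 4 by positivity)).const_mul
    (exp (ν ^ 2 / z))).mono' (by fun_prop) (.of_forall fun t => ?_)
  have h_cosh : z * (t ^ 2 / 2) ≤ z * cosh t := by
    gcongr
    linarith [one_add_sq_div_two_le_cosh t]
  have h_linear : ν * t ≤ z * t ^ 2 / 4 + ν ^ 2 / z := by
    have h_sq : z * t ^ 2 / 4 + ν ^ 2 / z - ν * t = z * (t / 2 - ν / z) ^ 2 := by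
      field_simp
      ring
    linarith [mul_nonneg hz.le (sq_nonneg (t / 2 - ν / z))]
  rw [norm_of_nonneg (exp_pos _).le, ← exp_add, exp_le_exp]
  linarith

lemma integral_exp_neg_mul_cosh_add {z : ℝ} (hz : 0 < z) (ν : ℝ) :
    ∫ t, exp (-z * cosh t + ν * t) = 2 * besselK ν z := by
  rw [integral_eq_integral_Ioi_add_comp_neg (integrable_exp_neg_mul_cosh_add hz ν), besselK,
    ← integral_const_mul]
  congr with t
  rw [cosh_neg, exp_add, exp_add, cosh_eq (ν * t), mul_neg]
  ring

/-- This is the normalizing constant of the generalized inverse Gaussian distribution. -/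
lemma integral_rpow_mul_exp_eq_besselK {α β : ℝ} (hα : 0 < α) (hβ : 0 < β) (ν : ℝ) :
    ∫ v in Ioi (0 : ℝ), v ^ (ν - 1) * exp (-(α ^ 2 * v + β ^ 2 / v) / 2) =
      2 * (β / α) ^ ν * besselK ν (α * β) := by
  have hk : 0 < β / α := div_pos hβ hα
  have h_pow (t : ℝ) : exp t * (β / α * exp t) ^ (ν - 1) = (β / α) ^ (ν - 1) * exp (ν * t) := by
    rw [mul_rpow hk.le (exp_pos t).le, ← exp_mul, mul_left_comm, ← exp_add]
    ring_nf
  have h_exponent (t : ℝ) :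
      -(α ^ 2 * (β / α * exp t) + β ^ 2 / (β / α * exp t)) / 2 = -(α * β) * cosh t := by
    rw [cosh_eq, exp_neg]
    field_simp
  calc ∫ v in Ioi (0 : ℝ), v ^ (ν - 1) * exp (-(α ^ 2 * v + β ^ 2 / v) / 2)
    _ = β / α * ∫ t, exp t * ((β / α * exp t) ^ (ν - 1) *
          exp (-(α ^ 2 * (β / α * exp t) + β ^ 2 / (β / α * exp t)) / 2)) := by
        have h_scale := integral_comp_mul_left_Ioi'
          (fun v => v ^ (ν - 1) * exp (-(α ^ 2 * v + β ^ 2 / v) / 2)) 0 hk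
        rw [mul_zero] at h_scale
        rw [← h_scale, integral_Ioi_zero_eq_integral_exp_smul]
        simp only [smul_eq_mul]
    _ = β / α * ∫ t, (β / α) ^ (ν - 1) * exp (-(α * β) * cosh t + ν * t) := by
        congr with t
        rw [← mul_assoc, h_pow, h_exponent, exp_add]
        ring
    _ = 2 * (β / α) ^ ν * besselK ν (α * β) := by
        rw [integral_const_mul, integral_exp_neg_mul_cosh_add (mul_pos hα hβ),
          rpow_sub_one hk.ne']
        field_simp

end BesselK

section GammaMeasure

lemma measurable_gammaPDF (a b : ℝ) : Measurable (gammaPDF a b) :=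
  (measurable_gammaPDFReal a b).ennreal_ofReal

lemma ae_pos_gammaMeasure (a b : ℝ) : ∀ᵐ v ∂gammaMeasure a b, 0 < v := by
  rw [gammaMeasure, ae_withDensity_iff (measurable_gammaPDF a b)]
  filter_upwards [Measure.ae_ne volume 0] with v hv0 hv
  exact (le_of_not_gt fun hneg => hv (gammaPDF_of_neg hneg)).lt_of_ne' hv0

lemma integral_gammaMeasure {E : Type*} [NormedAddCommGroup E] [NormedSpace ℝ E] {a b : ℝ}
    (ha : 0 < a) (hb : 0 < b) (f : ℝ → E) :
    ∫ v, f v ∂gammaMeasure a b =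
      ∫ v in Ioi (0 : ℝ), (b ^ a / Gamma a * v ^ (a - 1) * exp (-(b * v))) • f v := by
  have h_restrict : (gammaMeasure a b).restrict (Ioi 0) = gammaMeasure a b :=
    Measure.restrict_eq_self_of_ae_mem (ae_pos_gammaMeasure a b)
  rw [← h_restrict, gammaMeasure, setIntegral_withDensity_eq_setIntegral_toReal_smul
    (measurable_gammaPDF a b) (.of_forall fun _ => ENNReal.ofReal_lt_top)
    _ measurableSet_Ioi]
  refine setIntegral_congr_fun measurableSet_Ioi fun v hv => ?_
  rw [gammaPDF, ENNReal.toReal_ofReal (gammaPDFReal_nonneg ha hb v), gammaPDFReal,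
    if_pos (mem_Ioi.mp hv).le]

end GammaMeasure

section NormalMixture

/-- The density of the normal variance-mean mixture with mixing measure `ρ`: if `V` has law `ρ` and
`X` given `V = v` is normal with mean `μ + θ v` and variance `σ² v`, this is the density of `X`.
It is meant for `ρ` carried by `(0, ∞)`: for `v ≤ 0` the variance is truncated to `0`, for which
`gaussianPDFReal` is zero. -/
noncomputable def normalMixturePDF (ρ : Measure ℝ) (θ σ μ x : ℝ) : ℝ :=
  ∫ v, gaussianPDFReal (μ + θ * v) (σ ^ 2 * v).toNNReal x ∂ρ

lemma integral_normalMixturePDF {ρ : Measure ℝ} [IsFiniteMeasure ρ] (hρ : ∀ᵐ v ∂ρ, 0 < v)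
    {σ : ℝ} (hσ : σ ≠ 0) (θ μ : ℝ) :
    ∫ x, normalMixturePDF ρ θ σ μ x = ρ.real univ := by
  refine integral_integral_eq_measureReal_univ ?_ (fun _ _ => gaussianPDFReal_nonneg _ _ _)
    (hρ.mono fun v hv => integral_gaussianPDFReal_eq_one _ ?_)
  · unfold Function.uncurry gaussianPDFReal
    fun_prop
  · exact (toNNReal_pos.mpr (by positivity)).ne'

lemma gaussianPDFReal_variance_mean {σ v : ℝ} (hσ : 0 < σ) (hv : 0 < v) (θ μ x : ℝ) :
    gaussianPDFReal (μ + θ * v) (σ ^ 2 * v).toNNReal x =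
      (σ * √(2 * π))⁻¹ * exp (θ * (x - μ) / σ ^ 2) *
        (v ^ (-1 / 2 : ℝ) * exp (-(θ ^ 2 * v + (x - μ) ^ 2 / v) / (2 * σ ^ 2))) := by
  have h_sqrt : (√(2 * π * (σ ^ 2 * v)))⁻¹ = (σ * √(2 * π))⁻¹ * v ^ (-1 / 2 : ℝ) := by
    rw [sqrt_mul (by positivity), sqrt_mul (sq_nonneg σ), sqrt_sq hσ.le, neg_div,
      rpow_neg hv.le, ← sqrt_eq_rpow, ← mul_inv]
    ring
  have h_exponent : -(x - (μ + θ * v)) ^ 2 / (2 * (σ ^ 2 * v)) =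
      θ * (x - μ) / σ ^ 2 + -(θ ^ 2 * v + (x - μ) ^ 2 / v) / (2 * σ ^ 2) := by
    field_simp
    ring
  rw [gaussianPDFReal, coe_toNNReal _ (by positivity), h_sqrt, h_exponent, exp_add]
  ring

lemma normalMixturePDF_gammaMeasure {a b σ x μ : ℝ} (ha : 0 < a) (hb : 0 < b) (hσ : 0 < σ)
    (hx : x ≠ μ) (θ : ℝ) :
    normalMixturePDF (gammaMeasure a b) θ σ μ x =
      b ^ a / Gamma a * (σ * √(2 * π))⁻¹ * exp (θ * (x - μ) / σ ^ 2) *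
        (2 * (|x - μ| / √(θ ^ 2 + 2 * b * σ ^ 2)) ^ (a - 1 / 2) *
          besselK (a - 1 / 2) (√(θ ^ 2 + 2 * b * σ ^ 2) * |x - μ| / σ ^ 2)) := by
  set c := √(θ ^ 2 + 2 * b * σ ^ 2)
  have : 0 < c := sqrt_pos.mpr (by positivity)
  have hc_sq : c ^ 2 = θ ^ 2 + 2 * b * σ ^ 2 := sq_sqrt (by positivity)
  have : 0 < |x - μ| := abs_pos.mpr (sub_ne_zero.mpr hx)
  have h_pow {v : ℝ} (hv : 0 < v) :
      v ^ (a - 1) * v ^ (-1 / 2 : ℝ) = v ^ (a - 1 / 2 - 1) := by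
    rw [← rpow_add hv]
    ring_nf
  have h_exponent (v : ℝ) : -(b * v) + -(θ ^ 2 * v + (x - μ) ^ 2 / v) / (2 * σ ^ 2) =
      -((c / σ) ^ 2 * v + (|x - μ| / σ) ^ 2 / v) / 2 := by
    rw [div_pow, div_pow, hc_sq, sq_abs]
    field_simp
    ring
  have h_integrand {v : ℝ} (hv : 0 < v) :
      (b ^ a / Gamma a * v ^ (a - 1) * exp (-(b * v))) •
          gaussianPDFReal (μ + θ * v) (σ ^ 2 * v).toNNReal x =
        b ^ a / Gamma a * (σ * √(2 * π))⁻¹ * exp (θ * (x - μ) / σ ^ 2) *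
          (v ^ (a - 1 / 2 - 1) * exp (-((c / σ) ^ 2 * v + (|x - μ| / σ) ^ 2 / v) / 2)) := by
    rw [gaussianPDFReal_variance_mean hσ hv, ← h_pow hv, ← h_exponent, exp_add, smul_eq_mul]
    ring
  have h_ratio : |x - μ| / σ / (c / σ) = |x - μ| / c := div_div_div_cancel_right₀ hσ.ne' _ _
  have h_prod : c / σ * (|x - μ| / σ) = c * |x - μ| / σ ^ 2 := by
    rw [div_mul_div_comm, sq]
  rw [normalMixturePDF, integral_gammaMeasure ha hb,
    setIntegral_congr_fun measurableSet_Ioi fun v hv => h_integrand hv, integral_const_mul,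
    integral_rpow_mul_exp_eq_besselK (by positivity) (by positivity), h_ratio, h_prod]

end NormalMixture

section VarianceGamma

lemma vgPDF_nonneg {r σ : ℝ} (hr : 0 < r) (hσ : 0 < σ) (θ μ x : ℝ) : 0 ≤ vgPDF r θ σ μ x := by
  have : 0 < Gamma (r / 2) := Gamma_pos_of_pos (half_pos hr)
  have h_bessel := besselK_nonneg ((r - 1) / 2) (√(θ ^ 2 + σ ^ 2) * |x - μ| / σ ^ 2)
  unfold vgPDF
  positivity

lemma vgPDF_eq_normalMixturePDF {r σ x μ : ℝ} (hr : 0 < r) (hσ : 0 < σ) (hx : x ≠ μ) (θ : ℝ) :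
    vgPDF r θ σ μ x = normalMixturePDF (gammaMeasure (r / 2) (1 / 2)) θ σ μ x := by
  have h_radicand : θ ^ 2 + 2 * (1 / 2) * σ ^ 2 = θ ^ 2 + σ ^ 2 := by ring
  have h_order : r / 2 - 1 / 2 = (r - 1) / 2 := by ring
  have h_two : (1 / 2 : ℝ) ^ (r / 2) * 2 = √2 * (1 / 2) ^ ((r - 1) / 2) := by
    rw [← h_order, rpow_sub (by norm_num), ← sqrt_eq_rpow, sqrt_div zero_le_one, sqrt_one]
    field_simp
    rw [sq_sqrt zero_le_two]
  have h_scale : (|x - μ| / (2 * √(θ ^ 2 + σ ^ 2))) ^ ((r - 1) / 2) =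
      (1 / 2) ^ ((r - 1) / 2) * (|x - μ| / √(θ ^ 2 + σ ^ 2)) ^ ((r - 1) / 2) := by
    rw [← mul_rpow (by positivity) (by positivity), div_mul_div_comm, one_mul]
  have h_const : (1 / 2) ^ (r / 2) / Gamma (r / 2) * (σ * √(2 * π))⁻¹ * 2 =
      1 / (σ * √π * Gamma (r / 2)) * (1 / 2) ^ ((r - 1) / 2) := by
    rw [sqrt_mul zero_le_two]
    calc _ = ((1 / 2) ^ (r / 2) * 2) / (Gamma (r / 2) * σ * (√2 * √π)) := by ring
      _ = _ := by
        rw [h_two]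
        field_simp
  rw [normalMixturePDF_gammaMeasure (half_pos hr) one_half_pos hσ hx, h_radicand, h_order, vgPDF,
    h_scale]
  linear_combination -(exp (θ * (x - μ) / σ ^ 2) *
    (|x - μ| / √(θ ^ 2 + σ ^ 2)) ^ ((r - 1) / 2) *
    besselK ((r - 1) / 2) (√(θ ^ 2 + σ ^ 2) * |x - μ| / σ ^ 2)) * h_const

end VarianceGamma

/-- For `r > 0`, `θ ∈ ℝ`, `σ > 0`, `μ ∈ ℝ`, the variance-gamma density with parameters
`(r, θ, σ, μ)` is a probability density function: it is nonnegative and integrates to one. -/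
theorem vgPDF_is_probability_density
    (r θ σ μ : ℝ) (hr : 0 < r) (hσ : 0 < σ) :
    (∀ x : ℝ, 0 ≤ vgPDF r θ σ μ x) ∧ (∫ x : ℝ, vgPDF r θ σ μ x = 1) := by
  refine ⟨vgPDF_nonneg hr hσ θ μ, ?_⟩
  have := isProbabilityMeasure_gammaMeasure (half_pos hr) one_half_pos
  calc ∫ x, vgPDF r θ σ μ x
    _ = ∫ x, normalMixturePDF (gammaMeasure (r / 2) (1 / 2)) θ σ μ x := by
        refine integral_congr_ae ?_
        filter_upwards [Measure.ae_ne volume μ] with x hx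
        exact vgPDF_eq_normalMixturePDF hr hσ hx θ
    _ = (gammaMeasure (r / 2) (1 / 2)).real univ :=
        integral_normalMixturePDF (ae_pos_gammaMeasure _ _) hσ.ne' θ μ
    _ = 1 := probReal_univ
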